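/- arXiv:1807.11837 — 2 statements merged into one kernel-verified Lean document; each statement's English description precedes it below -/
import Mathlib

section
/- (Lyapunov-type inequality, left-focal problem) Suppose u : N[a+1,b] → ℝ is not identically zero and satisfies the summation equation u(t) = ∑_{s=a+2}^{b} G_l(t, s) q(s) u(s) for every t with a+1 ≤ t ≤ b (this is the Green's-function form of the left-focal fractional boundary value problem ∇_a^α u(t) + q(t)u(t) = 0 for a+2 ≤ t ≤ b, with ∇_a^{α−1} u(a+1) = 0 and u(b) = 0). Then ∑_{s=a+2}^{b} |q(s)| ≥ (α − 1)/(b − a − 1). -/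
/-- Rising factorial `rf x r = Γ(x+r)/Γ(x)`, with the convention `rf 0 r = 0`. -/
noncomputable def rf (x r : ℝ) : ℝ := if x = 0 then 0 else Real.Gamma (x + r) / Real.Gamma x

/-- The left-focal Green's function. -/
noncomputable def Gl (a b : ℤ) (α : ℝ) (t s : ℤ) : ℝ :=
  if t ≤ s - 1 then
    (1 / Real.Gamma α) *
      (rf (b - s + 1 : ℝ) (α - 1) * rf (t - a : ℝ) (α - 2) / rf (b - a : ℝ) (α - 2))
  else
    (1 / Real.Gamma α) *
      (rf (b - s + 1 : ℝ) (α - 1) * rf (t - a : ℝ) (α - 2) / rf (b - a : ℝ) (α - 2) -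
        rf (t - s + 1 : ℝ) (α - 1))

/-!
The equation at `t = a + 1` only expresses `u (a + 1)` through the other values of `u`, so `u` is
already nonzero somewhere on `[a + 2, b]`. Evaluating the equation at a point of this smaller
interval where `|u|` is maximal gives `1 ≤ (max |Gl|) * ∑ |q|`, with the maximum taken over
`[a + 2, b]²`. There `0 ≤ Gl ≤ b - a - 1`: log-convexity of `Γ` makes `x ↦ rf x r` increasing for
`0 ≤ r` and decreasing for `r ≤ 0`, so the common term of the two branches of `Gl` dominates the
subtracted one and is largest at the corner `t = s = a + 2`. Thus `∑ |q|` is at least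
`1 / (b - a - 1)`; starting from `t = a + 1` instead would cost the factor `α - 1`.
-/

open Finset

theorem convexOn_map_add_map_le {𝕜 : Type*} [Field 𝕜] [LinearOrder 𝕜] [IsStrictOrderedRing 𝕜]
    {S : Set 𝕜} {f : 𝕜 → 𝕜} (hf : ConvexOn 𝕜 S f) {x y r : 𝕜} (hx : x ∈ S) (hyr : y + r ∈ S)
    (hxy : x ≤ y) (hr : 0 ≤ r) : f (x + r) + f y ≤ f x + f (y + r) := by
  rcases hxy.eq_or_lt with rfl | hxy
  · rw [add_comm]
  have hlen : 0 < y - x + r := by linarith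
  -- `x + r` and `y` are the convex combinations of `x` and `y + r` with swapped weights.
  have hsum : (y - x) / (y - x + r) + r / (y - x + r) = 1 := by field
  have hweight₁ : 0 ≤ (y - x) / (y - x + r) := div_nonneg (sub_pos.2 hxy).le hlen.le
  have hweight₂ : 0 ≤ r / (y - x + r) := div_nonneg hr hlen.le
  have hleft := hf.2 hx hyr hweight₁ hweight₂ hsum
  have hright := hf.2 hx hyr hweight₂ hweight₁ ((add_comm _ _).trans hsum)
  simp only [smul_eq_mul] at hleft hright
  rw [show (y - x) / (y - x + r) * x + r / (y - x + r) * (y + r) = x + r by field] at hleft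
  rw [show r / (y - x + r) * x + (y - x) / (y - x + r) * (y + r) = y by field] at hright
  linear_combination hleft + hright + (f x + f (y + r)) * hsum

section RisingFactorial

variable {x r : ℝ}

-- At `x = 0` this holds because Mathlib sets `Γ 0 = 0` and `y / 0 = 0`.
theorem rf_eq_Gamma_div_Gamma (x r : ℝ) : rf x r = Real.Gamma (x + r) / Real.Gamma x := by
  unfold rf
  split_ifs with hx
  · rw [hx, Real.Gamma_zero, div_zero]
  · rfl

theorem rf_pos (hx : 0 < x) (hxr : 0 < x + r) : 0 < rf x r := by
  rw [rf_eq_Gamma_div_Gamma]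
  exact div_pos (Real.Gamma_pos_of_pos hxr) (Real.Gamma_pos_of_pos hx)

theorem rf_two_left (r : ℝ) : rf 2 r = Real.Gamma (2 + r) := by
  rw [rf_eq_Gamma_div_Gamma, Real.Gamma_two, div_one]

theorem rf_eq_inv_rf_neg (x r : ℝ) : rf x r = (rf (x + r) (-r))⁻¹ := by
  rw [rf_eq_Gamma_div_Gamma, rf_eq_Gamma_div_Gamma, inv_div, add_neg_cancel_right]

theorem rf_add_one_right (hx : x ≠ 0) (r : ℝ) : rf x (r + 1) = x * rf (x + 1) r := by
  rw [rf_eq_Gamma_div_Gamma, rf_eq_Gamma_div_Gamma, Real.Gamma_add_one hx, ← mul_div_assoc,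
    mul_div_mul_left _ _ hx, add_assoc, add_comm 1 r]

theorem rf_monotoneOn (hr : 0 ≤ r) : MonotoneOn (fun x ↦ rf x r) (Set.Ioi 0) := by
  intro x (hx : 0 < x) y (hy : 0 < y) hxy
  have hlog := convexOn_map_add_map_le Real.convexOn_log_Gamma hx
    (add_pos_of_pos_of_nonneg hy hr) hxy hr
  have hΓx := Real.Gamma_pos_of_pos hx
  have hΓy := Real.Gamma_pos_of_pos hy
  have hΓxr : 0 < Real.Gamma (x + r) := Real.Gamma_pos_of_pos (by linarith)
  have hΓyr : 0 < Real.Gamma (y + r) := Real.Gamma_pos_of_pos (by linarith)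
  simp only [Function.comp_apply] at hlog
  rw [← Real.log_mul hΓxr.ne' hΓy.ne', ← Real.log_mul hΓx.ne' hΓyr.ne',
    Real.log_le_log_iff (by positivity) (by positivity)] at hlog
  simp only [rf_eq_Gamma_div_Gamma]
  rw [div_le_div_iff₀ hΓx hΓy]
  linarith

theorem rf_antitoneOn (hr : r ≤ 0) : AntitoneOn (fun x ↦ rf x r) (Set.Ioi (-r)) := by
  intro x (hx : -r < x) y (hy : -r < y) hxy
  simp only [rf_eq_inv_rf_neg _ r]
  exact inv_anti₀ (rf_pos (by linarith) (by linarith))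
    (rf_monotoneOn (neg_nonneg.2 hr) (neg_lt_iff_pos_add.1 hx) (neg_lt_iff_pos_add.1 hy)
      (by linarith))

end RisingFactorial

section GreenFunction

/-- The term common to the two branches of `Gl a b α t s`, without the factor `1 / Γ(α)`. Its
arguments are real because the bounds on it do not depend on integrality. -/
noncomputable def focalTerm (a b α t s : ℝ) : ℝ :=
  rf (b - s + 1) (α - 1) * rf (t - a) (α - 2) / rf (b - a) (α - 2)

theorem rf_le_focalTerm {a b α t s : ℝ} (hα : α ≤ 2) (hs : s < b + 1) (hsα : s < b + α)
    (hta : 2 - α < t - a) (htb : t ≤ b) :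
    rf (b - s + 1) (α - 1) ≤ focalTerm a b α t s := by
  have hpos : 0 < rf (b - a) (α - 2) := rf_pos (by linarith) (by linarith)
  have hanti : rf (b - a) (α - 2) ≤ rf (t - a) (α - 2) :=
    rf_antitoneOn (by linarith) (Set.mem_Ioi.2 (by linarith)) (Set.mem_Ioi.2 (by linarith))
      (by linarith)
  rw [focalTerm, le_div_iff₀ hpos]
  exact mul_le_mul_of_nonneg_left hanti (rf_pos (by linarith) (by linarith)).le

theorem focalTerm_le {a b α t s : ℝ} (hα₁ : 1 ≤ α) (hα₂ : α ≤ 2) (has : a + 2 ≤ s)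
    (hsb : s < b + 1) (hat : a + 2 ≤ t) :
    focalTerm a b α t s ≤ (b - a - 1) * Real.Gamma α := by
  have hpos : 0 < rf (b - a) (α - 2) := rf_pos (by linarith) (by linarith)
  have hs : rf (b - s + 1) (α - 1) ≤ (b - a - 1) * rf (b - a) (α - 2) := by
    calc rf (b - s + 1) (α - 1) ≤ rf (b - a - 1) (α - 1) :=
          rf_monotoneOn (by linarith) (Set.mem_Ioi.2 (by linarith))
            (Set.mem_Ioi.2 (by linarith)) (by linarith)
      _ = (b - a - 1) * rf (b - a) (α - 2) := by
          rw [show α - 1 = α - 2 + 1 by ring, rf_add_one_right (by linarith), sub_add_cancel]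
  have ht : rf (t - a) (α - 2) ≤ Real.Gamma α := by
    calc rf (t - a) (α - 2) ≤ rf 2 (α - 2) :=
          rf_antitoneOn (by linarith) (Set.mem_Ioi.2 (by linarith))
            (Set.mem_Ioi.2 (by linarith)) (by linarith)
      _ = Real.Gamma α := by rw [rf_two_left, add_sub_cancel]
  rw [focalTerm, div_le_iff₀ hpos, mul_right_comm]
  exact mul_le_mul hs ht (rf_pos (by linarith) (by linarith)).le
    (mul_nonneg (by linarith) hpos.le)

variable {a b t s : ℤ} {α : ℝ}

theorem Gl_of_lt (hts : t < s) : Gl a b α t s = 1 / Real.Gamma α * focalTerm a b α t s :=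
  if_pos (Int.le_sub_one_of_lt hts)

theorem Gl_of_le (hst : s ≤ t) :
    Gl a b α t s = 1 / Real.Gamma α * (focalTerm a b α t s - rf (t - s + 1) (α - 1)) :=
  if_neg (by lia)

theorem Gl_nonneg (hα₁ : 1 < α) (hα₂ : α ≤ 2) (hat : a + 1 ≤ t) (htb : t ≤ b) (hsb : s ≤ b) :
    0 ≤ Gl a b α t s := by
  have hΓ : 0 ≤ 1 / Real.Gamma α := one_div_nonneg.2 (Real.Gamma_nonneg_of_nonneg (by linarith))
  have hat' : (a + 1 : ℝ) ≤ t := mod_cast hat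
  have htb' : (t : ℝ) ≤ b := mod_cast htb
  have hsb' : (s : ℝ) ≤ b := mod_cast hsb
  have hterm : rf (b - s + 1) (α - 1) ≤ focalTerm a b α t s :=
    rf_le_focalTerm hα₂ (by linarith) (by linarith) (by linarith) htb'
  rcases lt_or_ge t s with hts | hst
  · rw [Gl_of_lt hts]
    exact mul_nonneg hΓ ((rf_pos (by linarith) (by linarith)).le.trans hterm)
  · have hst' : (s : ℝ) ≤ t := mod_cast hst
    have hmono : rf (t - s + 1) (α - 1) ≤ rf (b - s + 1) (α - 1) :=
      rf_monotoneOn (by linarith) (Set.mem_Ioi.2 (by linarith)) (Set.mem_Ioi.2 (by linarith))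
        (by linarith)
    rw [Gl_of_le hst]
    exact mul_nonneg hΓ (sub_nonneg.2 (hmono.trans hterm))

theorem Gl_le (hα₁ : 1 ≤ α) (hα₂ : α ≤ 2) (hat : a + 2 ≤ t) (has : a + 2 ≤ s) (hsb : s ≤ b) :
    Gl a b α t s ≤ b - a - 1 := by
  have hΓ : 0 < Real.Gamma α := Real.Gamma_pos_of_pos (by linarith)
  have hat' : (a + 2 : ℝ) ≤ t := mod_cast hat
  have has' : (a + 2 : ℝ) ≤ s := mod_cast has
  have hsb' : (s : ℝ) ≤ b := mod_cast hsb
  have hterm : 1 / Real.Gamma α * focalTerm a b α t s ≤ b - a - 1 := by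
    rw [one_div_mul_eq_div, div_le_iff₀ hΓ]
    exact focalTerm_le hα₁ hα₂ has' (by linarith) hat'
  rcases lt_or_ge t s with hts | hst
  · exact (Gl_of_lt hts).trans_le hterm
  · have hst' : (s : ℝ) ≤ t := mod_cast hst
    rw [Gl_of_le hst]
    refine le_trans (mul_le_mul_of_nonneg_left ?_ (one_div_pos.2 hΓ).le) hterm
    exact sub_le_self _ (rf_pos (by linarith) (by linarith)).le

end GreenFunction

theorem one_le_mul_sum_norm_of_eq_sum_kernel {ι R : Type*} [NonUnitalNormedRing R] {S : Finset ι}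
    {K : ι → ι → R} {q u : ι → R} {C : ℝ} (hK : ∀ t ∈ S, ∀ s ∈ S, ‖K t s‖ ≤ C)
    (hu : ∃ t ∈ S, u t ≠ 0) (heq : ∀ t ∈ S, u t = ∑ s ∈ S, K t s * q s * u s) :
    1 ≤ C * ∑ s ∈ S, ‖q s‖ := by
  obtain ⟨t₀, ht₀, hut₀⟩ := hu
  obtain ⟨m, hm, hmax⟩ := S.exists_max_image (fun s ↦ ‖u s‖) ⟨t₀, ht₀⟩
  have hum : 0 < ‖u m‖ := (norm_pos_iff.2 hut₀).trans_le (hmax t₀ ht₀)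
  have hC : 0 ≤ C := (norm_nonneg _).trans (hK m hm m hm)
  refine (le_mul_iff_one_le_left hum).1 ?_
  calc ‖u m‖ = ‖∑ s ∈ S, K m s * q s * u s‖ := congrArg _ (heq m hm)
    _ ≤ ∑ s ∈ S, ‖K m s‖ * ‖q s‖ * ‖u s‖ := norm_sum_le_of_le _ fun _ _ ↦ norm_mul₃_le
    _ ≤ ∑ s ∈ S, C * ‖q s‖ * ‖u m‖ := by
        gcongr with s hs
        exacts [hK m hm s hs, hmax s hs]
    _ = C * (∑ s ∈ S, ‖q s‖) * ‖u m‖ := by rw [mul_sum, sum_mul]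

theorem left_focal_lyapunov_general (a b : ℤ) (hab : 2 ≤ b - a) (α : ℝ)
    (hα1 : 1 < α) (hα2 : α ≤ 2) (q : ℤ → ℝ) (u : ℤ → ℝ)
    (hu : ∃ t : ℤ, a + 1 ≤ t ∧ t ≤ b ∧ u t ≠ 0)
    (heq : ∀ t : ℤ, a + 1 ≤ t → t ≤ b →
      u t = ∑ s ∈ Finset.Icc (a + 2) b, Gl a b α t s * q s * u s) :
    1 / (b - a - 1 : ℝ) ≤ ∑ s ∈ Finset.Icc (a + 2) b, |q s| := by
  have hab' : (2 : ℝ) ≤ b - a := mod_cast hab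
  have hGl : ∀ t ∈ Icc (a + 2) b, ∀ s ∈ Icc (a + 2) b, ‖Gl a b α t s‖ ≤ b - a - 1 := by
    intro t ht s hs
    obtain ⟨hat, htb⟩ := mem_Icc.1 ht
    obtain ⟨has, hsb⟩ := mem_Icc.1 hs
    rw [Real.norm_of_nonneg (Gl_nonneg hα1 hα2 (by lia) htb hsb)]
    exact Gl_le hα1.le hα2 hat has hsb
  have hu' : ∃ t ∈ Icc (a + 2) b, u t ≠ 0 := by
    by_contra! hzero
    obtain ⟨t, hat, htb, hut⟩ := hu
    exact hut ((heq t hat htb).trans (sum_eq_zero fun s hs ↦ by rw [hzero s hs, mul_zero]))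
  rw [div_le_iff₀' (by linarith)]
  exact one_le_mul_sum_norm_of_eq_sum_kernel hGl hu' fun t ht ↦
    heq t (by have := (mem_Icc.1 ht).1; lia) (mem_Icc.1 ht).2

theorem left_focal_lyapunov (a b : ℤ) (hab : 2 ≤ b - a) (α : ℝ)
    (hα1 : 1 < α) (hα2 : α < 2) (q : ℤ → ℝ) (u : ℤ → ℝ)
    (hu : ∃ t : ℤ, a + 1 ≤ t ∧ t ≤ b ∧ u t ≠ 0)
    (heq : ∀ t : ℤ, a + 1 ≤ t → t ≤ b →
      u t = ∑ s ∈ Finset.Icc (a + 2) b, Gl a b α t s * q s * u s) :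
    (α - 1) / (b - a - 1 : ℝ) ≤ ∑ s ∈ Finset.Icc (a + 2) b, |q s| := by
  have hab' : (2 : ℝ) ≤ b - a := mod_cast hab
  exact (div_le_div_of_nonneg_right (by linarith) (by linarith)).trans
    (left_focal_lyapunov_general a b hab α hα1 hα2.le q u hu heq)
end

section
/- (Lyapunov-type inequality, right-focal problem) Suppose u : N[a+1,b] → ℝ is not identically zero and satisfies the summation equation u(t) = ∑_{s=a+2}^{b} G_r(t, s) q(s) u(s) for every t with a+1 ≤ t ≤ b (this is the Green's-function form of the right-focal fractional boundary value problem ∇_a^α u(t) + q(t)u(t) = 0 for a+2 ≤ t ≤ b, with u(a+1) = 0 and ∇_a^{α−1} u(b) = 0). Then ∑_{s=a+2}^{b} |q(s)| ≥ Γ(α)/rf(b−a−1, α−1). -/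
/-- The right-focal Green's function. -/
noncomputable def Gr (a : ℤ) (α : ℝ) (t s : ℤ) : ℝ :=
  if t ≤ s - 1 then
    (1 / Real.Gamma α) * rf (t - a - 1 : ℝ) (α - 1)
  else
    (1 / Real.Gamma α) * (rf (t - a - 1 : ℝ) (α - 1) - rf (t - s + 1 : ℝ) (α - 1))

/-!
At a point `t` where `|u|` is maximal, the summation equation gives
`|u t| ≤ max |G_r| * (∑ |q s|) * |u t|`, and `|u t|` cancels. The kernel is bounded through the
monotonicity of `x ↦ Γ(x + r) / Γ(x)` on `[0, ∞)`, which is the log-convexity of `Γ`: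
`G_r(t, s)` lies between `0` and `rf(t - a - 1, α - 1) / Γ(α)`.
-/

section Convex

variable {𝕜 β : Type*} [Field 𝕜] [LinearOrder 𝕜] [IsStrictOrderedRing 𝕜]
  [AddCommGroup β] [PartialOrder β] [IsOrderedAddMonoid β] [Module 𝕜 β]

theorem convexOn_map_add_add_map_le {s : Set 𝕜} {f : 𝕜 → β} (hf : ConvexOn 𝕜 s f) {x y r : 𝕜}
    (hx : x ∈ s) (hyr : y + r ∈ s) (hxy : x ≤ y) (hr : 0 ≤ r) :
    f (x + r) + f y ≤ f x + f (y + r) := by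
  rcases hr.eq_or_lt with rfl | hr_pos
  · simp only [add_zero, le_refl]
  have hxy' : 0 ≤ y - x := sub_nonneg.mpr hxy
  have hd : 0 < y - x + r := add_pos_of_nonneg_of_pos hxy' hr_pos
  -- `x + r` and `y` are the convex combinations of `x` and `y + r` with swapped weights.
  set p := (y - x) / (y - x + r) with hp
  set q := r / (y - x + r) with hq
  have hp0 : 0 ≤ p := div_nonneg hxy' hd.le
  have hq0 : 0 ≤ q := div_nonneg hr hd.le
  have hpq : p + q = 1 := by rw [hp, hq, ← add_div, div_self hd.ne']
  have hxr_eq : p • x + q • (y + r) = x + r := by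
    simp only [hp, hq, smul_eq_mul]; field_simp; ring
  have hy_eq : q • x + p • (y + r) = y := by
    simp only [hp, hq, smul_eq_mul]; field_simp; ring
  calc f (x + r) + f y
      = f (p • x + q • (y + r)) + f (q • x + p • (y + r)) := by rw [hxr_eq, hy_eq]
    _ ≤ (p • f x + q • f (y + r)) + (q • f x + p • f (y + r)) :=
        add_le_add (hf.2 hx hyr hp0 hq0 hpq) (hf.2 hx hyr hq0 hp0 (by rw [add_comm, hpq]))
    _ = (p + q) • f x + (p + q) • f (y + r) := by module
    _ = f x + f (y + r) := by rw [hpq, one_smul, one_smul]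

end Convex

section RisingFactorial

variable {x y r : ℝ}

theorem Gamma_add_mul_Gamma_le (hx : 0 < x) (hxy : x ≤ y) (hr : 0 ≤ r) :
    Real.Gamma (x + r) * Real.Gamma y ≤ Real.Gamma x * Real.Gamma (y + r) := by
  have hy : 0 < y := hx.trans_le hxy
  have hyr : 0 < y + r := add_pos_of_pos_of_nonneg hy hr
  have hΓx := Real.Gamma_pos_of_pos hx
  have hΓy := Real.Gamma_pos_of_pos hy
  have hΓxr := Real.Gamma_pos_of_pos (add_pos_of_pos_of_nonneg hx hr)
  have hΓyr := Real.Gamma_pos_of_pos hyr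
  rw [← Real.log_le_log_iff (mul_pos hΓxr hΓy) (mul_pos hΓx hΓyr),
    Real.log_mul hΓxr.ne' hΓy.ne', Real.log_mul hΓx.ne' hΓyr.ne']
  exact convexOn_map_add_add_map_le Real.convexOn_log_Gamma hx hyr hxy hr

theorem rf_zero_left (r : ℝ) : rf 0 r = 0 := if_pos rfl

theorem rf_of_ne_zero (hx : x ≠ 0) (r : ℝ) : rf x r = Real.Gamma (x + r) / Real.Gamma x :=
  if_neg hx

theorem rf_nonneg (hx : 0 ≤ x) (hr : 0 ≤ r) : 0 ≤ rf x r := by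
  rcases hx.eq_or_lt with rfl | hx_pos
  · exact (rf_zero_left r).ge
  · rw [rf_of_ne_zero hx_pos.ne']
    exact div_nonneg (Real.Gamma_nonneg_of_nonneg (add_nonneg hx hr))
      (Real.Gamma_nonneg_of_nonneg hx)

theorem monotoneOn_rf (hr : 0 ≤ r) : MonotoneOn (fun x => rf x r) (Set.Ici 0) := by
  intro x (hx : 0 ≤ x) y (hy : 0 ≤ y) hxy
  change rf x r ≤ rf y r
  rcases hx.eq_or_lt with rfl | hx_pos
  · rw [rf_zero_left]
    exact rf_nonneg hy hr
  · have hy_pos : 0 < y := hx_pos.trans_le hxy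
    rw [rf_of_ne_zero hx_pos.ne', rf_of_ne_zero hy_pos.ne',
      div_le_div_iff₀ (Real.Gamma_pos_of_pos hx_pos) (Real.Gamma_pos_of_pos hy_pos),
      mul_comm (Real.Gamma (y + r))]
    exact Gamma_add_mul_Gamma_le hx_pos hxy hr

end RisingFactorial

section GreenFunction

variable {a b t s : ℤ} {α : ℝ}

theorem Gr_nonneg (hα : 1 ≤ α) (hat : a + 1 ≤ t) (has : a + 2 ≤ s) : 0 ≤ Gr a α t s := by
  have hα' : 0 ≤ α - 1 := sub_nonneg.mpr hα
  have hΓ : 0 ≤ 1 / Real.Gamma α :=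
    one_div_nonneg.mpr (Real.Gamma_nonneg_of_nonneg (zero_le_one.trans hα))
  have hat' : (0 : ℝ) ≤ t - a - 1 := by exact_mod_cast (by lia : 0 ≤ t - a - 1)
  unfold Gr
  split_ifs with hts
  · exact mul_nonneg hΓ (rf_nonneg hat' hα')
  · have hts' : (0 : ℝ) ≤ t - s + 1 := by exact_mod_cast (by lia : 0 ≤ t - s + 1)
    have hle : (t - s + 1 : ℝ) ≤ t - a - 1 := by
      exact_mod_cast (by lia : t - s + 1 ≤ t - a - 1)
    exact mul_nonneg hΓ (sub_nonneg.mpr (monotoneOn_rf hα' hts' hat' hle))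

theorem Gr_le_rf_div_Gamma (hα : 1 ≤ α) :
    Gr a α t s ≤ rf (t - a - 1 : ℝ) (α - 1) / Real.Gamma α := by
  have hΓ : 0 ≤ 1 / Real.Gamma α :=
    one_div_nonneg.mpr (Real.Gamma_nonneg_of_nonneg (zero_le_one.trans hα))
  rw [div_eq_mul_one_div, mul_comm]
  unfold Gr
  split_ifs with hts
  · exact le_rfl
  · have hts' : (0 : ℝ) ≤ t - s + 1 := by exact_mod_cast (by lia : 0 ≤ t - s + 1)
    exact mul_le_mul_of_nonneg_left
      (sub_le_self _ (rf_nonneg hts' (sub_nonneg.mpr hα))) hΓ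

theorem abs_Gr_le (hα : 1 ≤ α) (hat : a + 1 ≤ t) (htb : t ≤ b) (has : a + 2 ≤ s) :
    |Gr a α t s| ≤ rf (b - a - 1 : ℝ) (α - 1) / Real.Gamma α := by
  have hat' : (0 : ℝ) ≤ t - a - 1 := by exact_mod_cast (by lia : 0 ≤ t - a - 1)
  have hle : (t - a - 1 : ℝ) ≤ b - a - 1 := by exact_mod_cast (by lia : t - a - 1 ≤ b - a - 1)
  calc |Gr a α t s| = Gr a α t s := abs_of_nonneg (Gr_nonneg hα hat has)
    _ ≤ rf (t - a - 1 : ℝ) (α - 1) / Real.Gamma α := Gr_le_rf_div_Gamma hα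
    _ ≤ rf (b - a - 1 : ℝ) (α - 1) / Real.Gamma α :=
        div_le_div_of_nonneg_right
          (monotoneOn_rf (sub_nonneg.mpr hα) hat' (hat'.trans hle) hle)
          (Real.Gamma_nonneg_of_nonneg (zero_le_one.trans hα))

end GreenFunction

theorem one_le_sum_of_eq_sum_smul {ι R E : Type*} [SeminormedRing R] [NormedAddCommGroup E]
    [Module R E] [IsBoundedSMul R E] {S T : Finset ι} (hST : S ⊆ T) {K : ι → ι → R} {w : ι → ℝ}
    (hK : ∀ t ∈ T, ∀ s ∈ S, ‖K t s‖ ≤ w s) {u : ι → E} (hu : ∃ t ∈ T, u t ≠ 0)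
    (heq : ∀ t ∈ T, u t = ∑ s ∈ S, K t s • u s) : 1 ≤ ∑ s ∈ S, w s := by
  obtain ⟨t₀, ht₀, hut₀⟩ := hu
  obtain ⟨t, ht, hmax⟩ := T.exists_max_image (fun t => ‖u t‖) ⟨t₀, ht₀⟩
  have hut : 0 < ‖u t‖ := (norm_pos_iff.mpr hut₀).trans_le (hmax t₀ ht₀)
  have hterm : ∀ s ∈ S, ‖K t s • u s‖ ≤ w s * ‖u t‖ := fun s hs =>
    (norm_smul_le _ _).trans <|
      mul_le_mul (hK t ht s hs) (hmax s (hST hs)) (norm_nonneg _)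
        ((norm_nonneg _).trans (hK t ht s hs))
  refine le_of_mul_le_mul_right ?_ hut
  calc 1 * ‖u t‖ = ‖∑ s ∈ S, K t s • u s‖ := by rw [one_mul, ← heq t ht]
    _ ≤ ∑ s ∈ S, w s * ‖u t‖ := norm_sum_le_of_le S hterm
    _ = (∑ s ∈ S, w s) * ‖u t‖ := (Finset.sum_mul ..).symm

theorem right_focal_lyapunov_general {E : Type*} [NormedAddCommGroup E] [NormedSpace ℝ E]
    (a b : ℤ) (α : ℝ) (hα : 1 ≤ α) (q : ℤ → ℝ) (u : ℤ → E)
    (hu : ∃ t : ℤ, a + 1 ≤ t ∧ t ≤ b ∧ u t ≠ 0)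
    (heq : ∀ t : ℤ, a + 1 ≤ t → t ≤ b →
      u t = ∑ s ∈ Finset.Icc (a + 2) b, (Gr a α t s * q s) • u s) :
    Real.Gamma α / rf (b - a - 1 : ℝ) (α - 1) ≤ ∑ s ∈ Finset.Icc (a + 2) b, |q s| := by
  obtain ⟨t₀, hat₀, ht₀b, hut₀⟩ := hu
  have hΓ : 0 < Real.Gamma α := Real.Gamma_pos_of_pos (zero_lt_one.trans_le hα)
  have hrf : 0 ≤ rf (b - a - 1 : ℝ) (α - 1) :=
    rf_nonneg (by exact_mod_cast (by lia : 0 ≤ b - a - 1)) (sub_nonneg.mpr hα)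
  have hkernel : ∀ t ∈ Finset.Icc (a + 1) b, ∀ s ∈ Finset.Icc (a + 2) b,
      ‖Gr a α t s * q s‖ ≤ rf (b - a - 1 : ℝ) (α - 1) / Real.Gamma α * |q s| := by
    intro t ht s hs
    rw [Finset.mem_Icc] at ht hs
    rw [Real.norm_eq_abs, abs_mul]
    exact mul_le_mul_of_nonneg_right (abs_Gr_le hα ht.1 ht.2 hs.1) (abs_nonneg _)
  have hone := one_le_sum_of_eq_sum_smul (Finset.Icc_subset_Icc_left (by lia)) hkernel
    ⟨t₀, Finset.mem_Icc.mpr ⟨hat₀, ht₀b⟩, hut₀⟩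
    fun t ht => heq t (Finset.mem_Icc.mp ht).1 (Finset.mem_Icc.mp ht).2
  rw [← Finset.mul_sum, div_mul_eq_mul_div, one_le_div hΓ, mul_comm] at hone
  exact div_le_of_le_mul₀ hrf (Finset.sum_nonneg fun s _ => abs_nonneg (q s)) hone

theorem right_focal_lyapunov (a b : ℤ) (hab : 2 ≤ b - a) (α : ℝ)
    (hα1 : 1 < α) (hα2 : α < 2) (q : ℤ → ℝ) (u : ℤ → ℝ)
    (hu : ∃ t : ℤ, a + 1 ≤ t ∧ t ≤ b ∧ u t ≠ 0)
    (heq : ∀ t : ℤ, a + 1 ≤ t → t ≤ b →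
      u t = ∑ s ∈ Finset.Icc (a + 2) b, Gr a α t s * q s * u s) :
    Real.Gamma α / rf (b - a - 1 : ℝ) (α - 1) ≤ ∑ s ∈ Finset.Icc (a + 2) b, |q s| :=
  right_focal_lyapunov_general a b α hα1.le q u hu heq
end
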